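/- The number of tournaments on the 5-element set Fin 5 having no vertex of out-degree 4, no vertex of out-degree 0, exactly three vertices of out-degree 2 which form a directed 3-cycle among themselves, and such that the (unique) vertex of out-degree 3 defeats all three out-degree-2 vertices, is exactly 40. -/

import Mathlib

/-- A tournament: an irreflexive relation such that for distinct vertices exactly one
direction holds. -/
def IsTournament (r : Fin 5 → Fin 5 → Prop) : Prop :=
  (∀ a, ¬ r a a) ∧ ∀ a b : Fin 5, a ≠ b → Xor' (r a b) (r b a)

/-- The out-degree of a vertex: the number of vertices it defeats. -/
noncomputable def outDeg (r : Fin 5 → Fin 5 → Prop) (v : Fin 5) : ℕ :=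
  Nat.card {w : Fin 5 // r v w}

/-- Ten bits, one for every pair of vertices. -/
abbrev Bits : Type :=
  Bool × Bool × Bool × Bool × Bool × Bool × Bool × Bool × Bool × Bool

/-- The tournament coded by ten bits, as a Boolean matrix. -/
def mat : Bits → Fin 5 → Fin 5 → Bool
  | (a, b, c, d, e, f, g, h, i, j) =>
    ![![false, a, b, c, d], ![!a, false, e, f, g], ![!b, !e, false, h, i],
      ![!c, !f, !h, false, j], ![!d, !g, !i, !j, false]]

/-- Computable out-degree. -/
def bdeg (m : Fin 5 → Fin 5 → Bool) (v : Fin 5) : ℕ :=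
  (m v 0).toNat + (m v 1).toNat + (m v 2).toNat + (m v 3).toNat + (m v 4).toNat

/-- The computable version of the condition. -/
abbrev Good (m : Fin 5 → Fin 5 → Bool) : Prop :=
  (¬ ∃ w, bdeg m w = 4) ∧ (¬ ∃ l, bdeg m l = 0) ∧
      (∃ u v t : Fin 5, u ≠ v ∧ v ≠ t ∧ u ≠ t ∧
        bdeg m u = 2 ∧ bdeg m v = 2 ∧ bdeg m t = 2 ∧
        (∀ x, bdeg m x = 2 → x = u ∨ x = v ∨ x = t) ∧
        m u v ∧ m v t ∧ m t u ∧
        (∀ x, bdeg m x = 3 → m x u ∧ m x v ∧ m x t))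

theorem outDeg_eq (m : Fin 5 → Fin 5 → Bool) (v : Fin 5) :
    outDeg (fun a b => m a b = true) v = bdeg m v := by
  unfold outDeg bdeg
  rw [Nat.card_eq_fintype_card, Fintype.card_subtype, Finset.card_filter, Fin.sum_univ_five]
  have key : ∀ b : Bool, (if b = true then 1 else 0) = b.toNat := by decide
  simp [← key]

theorem mat_tournament (x : Bits) : IsTournament (fun a b => mat x a b = true) := by
  obtain ⟨a, b, c, d, e, f, g, h, i, j⟩ := x
  constructor
  · intro v
    fin_cases v <;> simp [mat]
  · intro v w hvw
    fin_cases v <;> fin_cases w <;> first | exact absurd rfl hvw | (simp only [mat, Xor', Xor]; simp)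

theorem mat_inj : Function.Injective mat := by
  rintro ⟨a, b, c, d, e, f, g, h, i, j⟩ ⟨aa, bb, cc, dd, ee, ff, gg, hh, ii, jj⟩ H
  have k := fun v w => congrFun (congrFun H v) w
  have h1 : a = aa := k 0 1
  have h2 : b = bb := k 0 2
  have h3 : c = cc := k 0 3
  have h4 : d = dd := k 0 4
  have h5 : e = ee := k 1 2
  have h6 : f = ff := k 1 3
  have h7 : g = gg := k 1 4
  have h8 : h = hh := k 2 3
  have h9 : i = ii := k 2 4
  have h10 : j = jj := k 3 4
  subst h1 h2 h3 h4 h5 h6 h7 h8 h9 h10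
  rfl

open Classical in
theorem mat_surj (r : Fin 5 → Fin 5 → Prop) (hr : IsTournament r) :
    ∃ x, (fun a b => mat x a b = true) = r := by
  refine ⟨(decide (r 0 1), decide (r 0 2), decide (r 0 3), decide (r 0 4), decide (r 1 2),
    decide (r 1 3), decide (r 1 4), decide (r 2 3), decide (r 2 4), decide (r 3 4)), ?_⟩
  obtain ⟨h0, h1⟩ := hr
  have key : ∀ a b, a ≠ b → (¬ r a b ↔ r b a) := by
    intro a b hab
    have := h1 a b hab
    unfold Xor' Xor at this
    tauto
  funext v w
  apply propext
  fin_cases v <;> fin_cases w <;>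
    first
    | simp [mat, h0]; done
    | simp [mat]; done
    | (simp only [mat]; simp; exact key _ _ (by decide))

theorem count_good : Fintype.card {x : Bits // Good (mat x)} = 40 := by
  decide +kernel

/-- exactly 40 tournaments on Fin 5 have no vertex of out-degree 4,
no vertex of out-degree 0, exactly three vertices of out-degree 2 forming a directed
3-cycle, and the (unique) vertex of out-degree 3 defeats all three of them
(the class Γ₂,₁). -/
theorem count_Gamma21 :
    Nat.card {r : Fin 5 → Fin 5 → Prop //
      IsTournament r ∧ (¬ ∃ w, outDeg r w = 4) ∧ (¬ ∃ l, outDeg r l = 0) ∧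
      (∃ u v t : Fin 5, u ≠ v ∧ v ≠ t ∧ u ≠ t ∧
        outDeg r u = 2 ∧ outDeg r v = 2 ∧ outDeg r t = 2 ∧
        (∀ x, outDeg r x = 2 → x = u ∨ x = v ∨ x = t) ∧
        r u v ∧ r v t ∧ r t u ∧
        (∀ x, outDeg r x = 3 → r x u ∧ r x v ∧ r x t))} = 40 := by
  rw [← count_good, ← Nat.card_eq_fintype_card]
  symm
  refine Nat.card_eq_of_bijective
    (fun x => ⟨fun a b => mat x.1 a b = true, mat_tournament x.1, ?_⟩) ⟨?_, ?_⟩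
  · simp only [outDeg_eq]
    exact x.2
  · intro x y hxy
    apply Subtype.ext
    apply mat_inj
    have h := congrArg Subtype.val hxy
    funext a b
    have := congrFun (congrFun h a) b
    exact Bool.eq_iff_iff.mpr (iff_of_eq this)
  · rintro ⟨r, hr, h⟩
    obtain ⟨x, rfl⟩ := mat_surj r hr
    simp only [outDeg_eq] at h
    exact ⟨⟨x, h⟩, rfl⟩
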